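/- Let N ≥ 1, let (c_{jk}) be a complex N×N matrix, let μ, a, b : ℝ → ℂ, let σ_1,…,σ_N ∈ {±1}, let π be an involutive permutation of {1,…,N}, let ε₁, ε₂, κ ∈ {±1}, and let x₀, t₀ ∈ ℝ; write X = ε₁x + x₀, T = ε₂t + t₀. Assume the coefficient conditions ε₂ μ(t) = κ conj(μ(T)), ε₁ a(t) = κ conj(a(T)), ε₁ b(t) = κ conj(b(T)) hold for all t, and the coupling constraint c_{jk} σ_j σ_k = conj(c_{π(j)π(k)}) holds for all j,k. If v_1,…,v_N : ℝ×ℝ → ℂ are three times continuously differentiable and satisfy μ(t) ∂_t v_i + a(t) ∂_x³ v_i + 3 b(t) ρ(x,t) ∂_x v_i = 0 for all i and all (x,t), where ρ(x,t) = Σ_{j,k=1}^N c_{jk} v_j(x,t) v_k(x,t), then the functions w_i(x,t) := σ_i conj(v_{π(i)}(X,T)) also satisfy μ(t) ∂_t w_i + a(t) ∂_x³ w_i + 3 b(t) ρ_w(x,t) ∂_x w_i = 0 for all i and all (x,t), where ρ_w(x,t) = Σ_{j,k=1}^N c_{jk} w_j(x,t) w_k(x,t). -/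

import Mathlib

/-!
Conjugation composed with an affine reflection of the variables commutes with `∂ₓ` and `∂ₜ` up to
the factors `ε₁` and `ε₂`, and by the coupling constraint it carries the density `ρ` of `v` to the
density of the reduced fields. The coefficient conditions then make the left-hand side of the `i`-th
equation for the reduced fields equal to `κ σ_i` times the conjugate of the left-hand side of the
`π(i)`-th equation for `v` at the reflected point.
-/

/-- Partial derivative in the first (space) variable of a complex-valued field. -/
noncomputable def pX (f : ℝ → ℝ → ℂ) : ℝ → ℝ → ℂ :=
  fun x t => deriv (fun x' => f x' t) x

/-- Partial derivative in the second (time) variable of a complex-valued field. -/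
noncomputable def pT (f : ℝ → ℝ → ℂ) : ℝ → ℝ → ℂ :=
  fun x t => deriv (fun t' => f x t') t

open scoped ComplexConjugate

theorem deriv_star_comp_mul_add {F : Type*} [NormedAddCommGroup F] [NormedSpace ℝ F]
    [StarAddMonoid F] [ContinuousStar F] [StarModule ℝ F] (g : ℝ → F) (m d x : ℝ) :
    deriv (fun y => star (g (m * y + d))) x = m • star (deriv g (m * x + d)) := by
  rw [deriv.star, deriv_comp_mul_left m (fun z => g (z + d)), deriv_comp_add_const, star_smul,
    star_trivial]

theorem pX_const_smul (s : ℂ) (f : ℝ → ℝ → ℂ) : pX (s • f) = s • pX f := by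
  funext x t
  exact deriv_const_mul_field s

theorem pT_const_smul (s : ℂ) (f : ℝ → ℝ → ℂ) : pT (s • f) = s • pT f := by
  funext x t
  exact deriv_const_mul_field s

section ConjReflection

variable (ε₁ ε₂ x₀ t₀ : ℝ)

/-- The complex conjugate of a field read at the reflected variables
`X = ε₁ x + x₀`, `T = ε₂ t + t₀`; the factors `ε₁` and `ε₂` may be arbitrary reals. -/
noncomputable def conjReflection (f : ℝ → ℝ → ℂ) : ℝ → ℝ → ℂ :=
  fun x t => conj (f (ε₁ * x + x₀) (ε₂ * t + t₀))

theorem pX_conjReflection (f : ℝ → ℝ → ℂ) :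
    pX (conjReflection ε₁ ε₂ x₀ t₀ f) = (ε₁ : ℂ) • conjReflection ε₁ ε₂ x₀ t₀ (pX f) := by
  funext x t
  exact deriv_star_comp_mul_add (fun y => f y (ε₂ * t + t₀)) ε₁ x₀ x

theorem pT_conjReflection (f : ℝ → ℝ → ℂ) :
    pT (conjReflection ε₁ ε₂ x₀ t₀ f) = (ε₂ : ℂ) • conjReflection ε₁ ε₂ x₀ t₀ (pT f) := by
  funext x t
  exact deriv_star_comp_mul_add (f (ε₁ * x + x₀)) ε₂ t₀ t

theorem contDiff_conjReflection {n : WithTop ℕ∞} {f : ℝ → ℝ → ℂ}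
    (hf : ContDiff ℝ n (fun p : ℝ × ℝ => f p.1 p.2)) :
    ContDiff ℝ n (fun p : ℝ × ℝ => conjReflection ε₁ ε₂ x₀ t₀ f p.1 p.2) :=
  Complex.conjCLE.contDiff.comp <|
    hf.comp (g := fun p : ℝ × ℝ => f p.1 p.2)
      (f := fun p : ℝ × ℝ => (ε₁ * p.1 + x₀, ε₂ * p.2 + t₀)) (by fun_prop)

/-- The shifted nonlocal reduction `w_i(x, t) = σ_i conj(v_{π(i)}(X, T))` of a family of fields,
with arbitrary complex weights `σ_i` and an arbitrary permutation `π` of the components. -/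
noncomputable def shiftedNonlocalReduction {ι : Type*} (σ : ι → ℂ) (π : Equiv.Perm ι)
    (v : ι → ℝ → ℝ → ℂ) : ι → ℝ → ℝ → ℂ :=
  fun i => σ i • conjReflection ε₁ ε₂ x₀ t₀ (v (π i))

end ConjReflection

section HIMKdV

variable {ι : Type*} [Fintype ι]

/-- The quadratic density `ρ = ∑ c_{jk} v_j v_k` that couples the equations of the HI–mKdV
system. -/
noncomputable def couplingDensity (c : ι → ι → ℂ) (v : ι → ℝ → ℝ → ℂ) (x t : ℝ) : ℂ :=
  ∑ j, ∑ k, c j k * v j x t * v k x t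

/-- The left-hand side `μ ∂ₜ v_i + a ∂ₓ³ v_i + 3 b ρ ∂ₓ v_i` of the `i`-th HI–mKdV equation. -/
noncomputable def hiMKdVResidual (c : ι → ι → ℂ) (μ a b : ℝ → ℂ) (v : ι → ℝ → ℝ → ℂ) (i : ι)
    (x t : ℝ) : ℂ :=
  μ t * pT (v i) x t + a t * pX (pX (pX (v i))) x t +
    3 * b t * couplingDensity c v x t * pX (v i) x t

/-- Classical solutions of the HI–mKdV system. The fields are required to be `C³` jointly in
`(x, t)`, so that every derivative in the equations is a genuine one. -/
structure IsClassicalSolution (c : ι → ι → ℂ) (μ a b : ℝ → ℂ) (v : ι → ℝ → ℝ → ℂ) : Prop where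
  contDiff : ∀ i, ContDiff ℝ 3 (fun p : ℝ × ℝ => v i p.1 p.2)
  residual_eq_zero : ∀ i x t, hiMKdVResidual c μ a b v i x t = 0

variable {c : ι → ι → ℂ} {μ a b : ℝ → ℂ} {σ : ι → ℂ} {π : Equiv.Perm ι} {ε₁ ε₂ x₀ t₀ : ℝ} {κ : ℂ}

theorem couplingDensity_shiftedNonlocalReduction
    (hc : ∀ j k, c j k * σ j * σ k = conj (c (π j) (π k))) (v : ι → ℝ → ℝ → ℂ) (x t : ℝ) :
    couplingDensity c (shiftedNonlocalReduction ε₁ ε₂ x₀ t₀ σ π v) x t =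
      conj (couplingDensity c v (ε₁ * x + x₀) (ε₂ * t + t₀)) := by
  set V : ι → ℂ := fun j => v j (ε₁ * x + x₀) (ε₂ * t + t₀)
  calc ∑ j, ∑ k, c j k * (σ j * conj (V (π j))) * (σ k * conj (V (π k)))
      = ∑ j, ∑ k, conj (c (π j) (π k) * V (π j) * V (π k)) := by
        refine Finset.sum_congr rfl fun j _ => Finset.sum_congr rfl fun k _ => ?_
        rw [map_mul, map_mul, ← hc]
        ring
    _ = ∑ j, ∑ k, conj (c j k * V j * V k) := by
        rw [← Equiv.sum_comp π (fun j => ∑ k, conj (c j k * V j * V k))]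
        exact Finset.sum_congr rfl fun j _ =>
          Equiv.sum_comp π (fun k => conj (c (π j) k * V (π j) * V k))
    _ = conj (∑ j, ∑ k, c j k * V j * V k) := by
        simp only [map_sum]

theorem hiMKdVResidual_shiftedNonlocalReduction {t : ℝ}
    (hμ : ε₂ * μ t = κ * conj (μ (ε₂ * t + t₀)))
    (ha : (ε₁ : ℂ) ^ 3 * a t = κ * conj (a (ε₂ * t + t₀)))
    (hb : ε₁ * b t = κ * conj (b (ε₂ * t + t₀)))
    (hc : ∀ j k, c j k * σ j * σ k = conj (c (π j) (π k)))
    (v : ι → ℝ → ℝ → ℂ) (i : ι) (x : ℝ) :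
    hiMKdVResidual c μ a b (shiftedNonlocalReduction ε₁ ε₂ x₀ t₀ σ π v) i x t =
      κ * σ i * conj (hiMKdVResidual c μ a b v (π i) (ε₁ * x + x₀) (ε₂ * t + t₀)) := by
  rw [hiMKdVResidual, couplingDensity_shiftedNonlocalReduction hc]
  simp only [shiftedNonlocalReduction, pX_const_smul, pT_const_smul, pX_conjReflection,
    pT_conjReflection, Pi.smul_apply, smul_eq_mul, conjReflection, hiMKdVResidual, map_add,
    map_mul, Complex.conj_ofNat]
  set X := ε₁ * x + x₀
  set T := ε₂ * t + t₀
  linear_combination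
    σ i * conj (pT (v (π i)) X T) * hμ + σ i * conj (pX (pX (pX (v (π i)))) X T) * ha +
      3 * σ i * conj (couplingDensity c v X T) * conj (pX (v (π i)) X T) * hb

/- For `ε₁ = ±1` the factor `ε₁ ^ 3`, one `ε₁` for each space derivative, is `ε₁` itself. -/
theorem shifted_nonlocal_reduction_compatibility_general
    (hμ : ∀ t : ℝ, ε₂ * μ t = κ * conj (μ (ε₂ * t + t₀)))
    (ha : ∀ t : ℝ, (ε₁ : ℂ) ^ 3 * a t = κ * conj (a (ε₂ * t + t₀)))
    (hb : ∀ t : ℝ, ε₁ * b t = κ * conj (b (ε₂ * t + t₀)))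
    (hc : ∀ j k, c j k * σ j * σ k = conj (c (π j) (π k)))
    {v : ι → ℝ → ℝ → ℂ} (hv : IsClassicalSolution c μ a b v) :
    IsClassicalSolution c μ a b (shiftedNonlocalReduction ε₁ ε₂ x₀ t₀ σ π v) where
  contDiff i := (contDiff_conjReflection ε₁ ε₂ x₀ t₀ (hv.contDiff (π i))).const_smul (σ i)
  residual_eq_zero i x t := by
    rw [hiMKdVResidual_shiftedNonlocalReduction (hμ t) (ha t) (hb t) hc, hv.residual_eq_zero,
      map_zero, mul_zero]

end HIMKdV

/-- under the coefficient conditions and the coupling constraint, the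
variable-coefficient coupled HI–mKdV system is closed under the shifted nonlocal reduction
`w_i(x,t) = σ_i conj(v_{π(i)}(ε₁ x + x₀, ε₂ t + t₀))`. -/
theorem shifted_nonlocal_reduction_compatibility {N : ℕ} (hN : 1 ≤ N)
    (c : Fin N → Fin N → ℂ) (μ a b : ℝ → ℂ)
    (σ : Fin N → ℝ) (π : Equiv.Perm (Fin N)) (hπ : ∀ i, π (π i) = i)
    (ε₁ ε₂ κ x₀ t₀ : ℝ)
    (hσ : ∀ i, σ i = 1 ∨ σ i = -1)
    (hε₁ : ε₁ = 1 ∨ ε₁ = -1) (hε₂ : ε₂ = 1 ∨ ε₂ = -1) (hκ : κ = 1 ∨ κ = -1)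
    (hμ : ∀ t : ℝ, (ε₂ : ℂ) * μ t = (κ : ℂ) * (starRingEnd ℂ) (μ (ε₂ * t + t₀)))
    (ha : ∀ t : ℝ, (ε₁ : ℂ) * a t = (κ : ℂ) * (starRingEnd ℂ) (a (ε₂ * t + t₀)))
    (hb : ∀ t : ℝ, (ε₁ : ℂ) * b t = (κ : ℂ) * (starRingEnd ℂ) (b (ε₂ * t + t₀)))
    (hc : ∀ j k, c j k * (σ j : ℂ) * (σ k : ℂ) = (starRingEnd ℂ) (c (π j) (π k)))
    (v : Fin N → ℝ → ℝ → ℂ)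
    (hv : ∀ i, ContDiff ℝ 3 (fun p : ℝ × ℝ => v i p.1 p.2))
    (hsys : ∀ i (x t : ℝ),
      μ t * pT (v i) x t + a t * pX (pX (pX (v i))) x t +
        3 * b t * (∑ j, ∑ k, c j k * v j x t * v k x t) * pX (v i) x t = 0)
    (w : Fin N → ℝ → ℝ → ℂ)
    (hw : ∀ i (x t : ℝ), w i x t =
      (σ i : ℂ) * (starRingEnd ℂ) (v (π i) (ε₁ * x + x₀) (ε₂ * t + t₀))) :
    ∀ i (x t : ℝ),
      μ t * pT (w i) x t + a t * pX (pX (pX (w i))) x t +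
        3 * b t * (∑ j, ∑ k, c j k * w j x t * w k x t) * pX (w i) x t = 0 := by
  have ε₁_cube : (ε₁ : ℂ) ^ 3 = ε₁ := by rcases hε₁ with rfl | rfl <;> norm_num
  obtain rfl : w = shiftedNonlocalReduction ε₁ ε₂ x₀ t₀ (fun i => (σ i : ℂ)) π v := by
    funext i x t
    exact hw i x t
  exact (shifted_nonlocal_reduction_compatibility_general hμ (by rwa [ε₁_cube]) hb hc
    ⟨hv, hsys⟩).residual_eq_zero
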